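/- Least action principle: Let φ be a state on a finite set Γ ⊂ ℤ², and let 𝓗 be the set of all functions H : ℤ² → ℤ≥0 that vanish outside Γ and satisfy φ + ΔH ≤ 3 on Γ. Then 𝓗 is nonempty, the pointwise minimum F(v) = min{H(v) : H ∈ 𝓗} itself belongs to 𝓗, and φ° = φ + ΔF on Γ. -/

import Mathlib

/-!
Suppose `H ∈ 𝓗`, each site `w` has so far toppled `u w ≤ H w` times, and the current state `φ + Δu`
is at least `4` at `v`. Then `u v = H v` is impossible: raising `u` to `H` away from `v` only
increases the Laplacian at `v`, so `4 ≤ φ v + Δu v ≤ φ v + ΔH v ≤ 3`. Hence legal topplings never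
overshoot a member of `𝓗`. Once the state is stable, the toppling count itself lies in `𝓗`, so it is
the least element. The class `𝓗` is closed under pointwise minima because lowering a function away
from `v` only decreases its Laplacian at `v`. If `Γ` lies in a strip of finite width and `φ` is
bounded above, then a large multiple of a concave parabola across the strip, cut off outside `Γ`,
belongs to `𝓗`.
-/

open Filter
open scoped Pointwise Topology

/-! ## The abelian sandpile model on a finite subset `Γ` of `ℤ²` -/

/-- Lattice sites. -/
abbrev V : Type := ℤ × ℤ

/-- The four lattice neighbours of `v`. -/
def nbrs (v : V) : Finset V :=
  {(v.1 + 1, v.2), (v.1 - 1, v.2), (v.1, v.2 + 1), (v.1, v.2 - 1)}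

/-- A sandpile state on `Γ`: a nonnegative integer valued function, regarded as a
function on all of `ℤ²` vanishing outside `Γ`. -/
def IsState (Γ : Set V) (φ : V → ℤ) : Prop :=
  (∀ v, 0 ≤ φ v) ∧ ∀ v ∉ Γ, φ v = 0

open Classical in
/-- The toppling operator at `v ∈ Γ`: `T_v φ = φ - 4δ_v + ∑_{w ∈ n(v) ∩ Γ} δ_w`. -/
noncomputable def toppleAt (Γ : Set V) (v : V) (φ : V → ℤ) : V → ℤ :=
  fun w => φ w - (if w = v then 4 else 0) + (if w ∈ nbrs v ∧ w ∈ Γ then 1 else 0)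

/-- A state is stable if it is at most `3` everywhere on `Γ`. -/
def StableState (Γ : Set V) (φ : V → ℤ) : Prop := ∀ v ∈ Γ, φ v ≤ 3

/-- One legal toppling step: topple some `v ∈ Γ` with `φ v ≥ 4`. -/
def LegalStep (Γ : Set V) (φ ψ : V → ℤ) : Prop :=
  ∃ v ∈ Γ, 4 ≤ φ v ∧ ψ = toppleAt Γ v φ

/-- `ρ 0, ρ 1, …, ρ m` is a relaxation of `φ`: a sequence of legal topplings
ending in a stable state. -/
def IsRelaxation (Γ : Set V) (φ : V → ℤ) (m : ℕ) (ρ : ℕ → V → ℤ) : Prop :=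
  ρ 0 = φ ∧ (∀ i < m, LegalStep Γ (ρ i) (ρ (i + 1))) ∧ StableState Γ (ρ m)

/-- `ψ` is the result of some relaxation of `φ`. -/
def Relaxes (Γ : Set V) (φ ψ : V → ℤ) : Prop :=
  ∃ m ρ, IsRelaxation Γ φ m ρ ∧ ρ m = ψ

/-- The discrete Laplacian `ΔH(v) = -4H(v) + ∑_{w ∈ n(v)} H(w)`. -/
def lap (H : V → ℤ) (v : V) : ℤ := -4 * H v + ∑ w ∈ nbrs v, H w

/-- `H` belongs to the class `𝓗` for the state `φ` on `Γ`: it is nonnegative,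
vanishes outside `Γ`, and `φ + ΔH ≤ 3` on `Γ`. -/
def Odometer (Γ : Set V) (φ : V → ℤ) (H : V → ℤ) : Prop :=
  (∀ v, 0 ≤ H v) ∧ (∀ v ∉ Γ, H v = 0) ∧ ∀ v ∈ Γ, φ v + lap H v ≤ 3

theorem mem_nbrs_comm {v w : V} : w ∈ nbrs v ↔ v ∈ nbrs w := by
  simp only [nbrs, Finset.mem_insert, Finset.mem_singleton, Prod.ext_iff]
  omega

theorem abs_fst_sub_fst_le_one_of_mem_nbrs {v w : V} (hw : w ∈ nbrs v) : |w.1 - v.1| ≤ 1 := by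
  simp only [nbrs, Finset.mem_insert, Finset.mem_singleton, Prod.ext_iff] at hw
  rw [abs_le]
  omega

theorem sum_nbrs (H : V → ℤ) (v : V) :
    ∑ w ∈ nbrs v, H w =
      H (v.1 + 1, v.2) + H (v.1 - 1, v.2) + H (v.1, v.2 + 1) + H (v.1, v.2 - 1) := by
  rw [nbrs, Finset.sum_insert, Finset.sum_insert, Finset.sum_insert, Finset.sum_singleton]
  · ring
  all_goals
    simp only [Finset.mem_insert, Finset.mem_singleton, Prod.mk.injEq]
    omega

theorem lap_le_lap {H K : V → ℤ} {v : V} (hv : K v ≤ H v) (h : ∀ w ∈ nbrs v, H w ≤ K w) :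
    lap H v ≤ lap K v :=
  add_le_add (by linarith) (Finset.sum_le_sum h)

theorem lap_zero (v : V) : lap 0 v = 0 := by
  simp [lap]

theorem lap_add (H K : V → ℤ) (v : V) : lap (H + K) v = lap H v + lap K v := by
  simp only [lap, Pi.add_apply, Finset.sum_add_distrib]
  ring

theorem lap_single_one (v w : V) :
    lap (Pi.single v 1) w = -(if w = v then 4 else 0) + if w ∈ nbrs v then 1 else 0 := by
  simp only [lap, Pi.single_apply, Finset.sum_ite_eq', mem_nbrs_comm (v := w)]
  split_ifs <;> rfl

/-- `c` times the concave parabola in the first coordinate with zeros at `a`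
and `b`. It is nonnegative on the strip `a ≤ x ≤ b` when `0 ≤ c`, and has constant Laplacian, so it
serves as a barrier showing that the class `𝓗` is nonempty. -/
def stripBarrier (a b c : ℤ) (v : V) : ℤ := c * ((v.1 - a) * (b - v.1))

theorem stripBarrier_nonneg {a b c : ℤ} {v : V} (hc : 0 ≤ c) (ha : a ≤ v.1) (hb : v.1 ≤ b) :
    0 ≤ stripBarrier a b c v :=
  mul_nonneg hc (mul_nonneg (sub_nonneg.2 ha) (sub_nonneg.2 hb))

theorem lap_stripBarrier (a b c : ℤ) (v : V) : lap (stripBarrier a b c) v = -2 * c := by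
  simp only [lap, sum_nbrs, stripBarrier]
  ring

theorem lap_indicator_le {Γ : Set V} {H : V → ℤ} {v : V} (hv : v ∈ Γ)
    (hH : ∀ w ∈ nbrs v, 0 ≤ H w) : lap (Γ.indicator H) v ≤ lap H v :=
  lap_le_lap (Set.indicator_of_mem hv H).ge fun w hw =>
    Set.indicator_apply_le' (fun _ => le_rfl) fun _ => hH w hw

theorem odometer_indicator_stripBarrier {Γ : Set V} {φ : V → ℤ} {a b c : ℤ} (hc : 0 ≤ c)
    (hΓ : ∀ v ∈ Γ, a < v.1 ∧ v.1 < b) (hφ : ∀ v ∈ Γ, φ v ≤ 3 + 2 * c) :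
    Odometer Γ φ (Γ.indicator (stripBarrier a b c)) := by
  refine ⟨Set.indicator_nonneg fun v hv => ?_, fun v hv => Set.indicator_of_notMem hv _,
    fun v hv => ?_⟩
  · exact stripBarrier_nonneg hc (hΓ v hv).1.le (hΓ v hv).2.le
  · have nonneg_nbrs : ∀ w ∈ nbrs v, 0 ≤ stripBarrier a b c w := fun w hw => by
      obtain ⟨hav, hvb⟩ := hΓ v hv
      obtain ⟨hl, hr⟩ := abs_le.1 (abs_fst_sub_fst_le_one_of_mem_nbrs hw)
      exact stripBarrier_nonneg hc (by omega) (by omega)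
    calc φ v + lap (Γ.indicator (stripBarrier a b c)) v
        ≤ (3 + 2 * c) + lap (stripBarrier a b c) v :=
          add_le_add (hφ v hv) (lap_indicator_le hv nonneg_nbrs)
      _ = 3 := by rw [lap_stripBarrier]; ring

theorem exists_odometer {Γ : Set V} {φ : V → ℤ} (hΓ : (Prod.fst '' Γ).Finite)
    (hφ : BddAbove (φ '' Γ)) : ∃ H, Odometer Γ φ H := by
  obtain ⟨l, hl⟩ := hΓ.bddBelow
  obtain ⟨r, hr⟩ := hΓ.bddAbove
  obtain ⟨M, hM⟩ := hφ
  refine ⟨_, odometer_indicator_stripBarrier (a := l - 1) (b := r + 1) (abs_nonneg M)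
    (fun v hv => ⟨?_, ?_⟩) fun v hv => ?_⟩
  · exact Int.sub_one_lt_of_le (hl (Set.mem_image_of_mem _ hv))
  · exact Int.lt_add_one_of_le (hr (Set.mem_image_of_mem _ hv))
  · linarith [hM (Set.mem_image_of_mem φ hv), le_abs_self M, abs_nonneg M]

/-- The pointwise minimum `F` of the class `𝓗`, as an infimum in `ℤ`; when `𝓗` is empty it takes
the junk value `sInf ∅ = 0`. -/
noncomputable def leastOdometer (Γ : Set V) (φ : V → ℤ) (v : V) : ℤ :=
  sInf ((fun H : V → ℤ => H v) '' {H | Odometer Γ φ H})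

theorem leastOdometer_le {Γ : Set V} {φ H : V → ℤ} (hH : Odometer Γ φ H) :
    leastOdometer Γ φ ≤ H := fun v =>
  csInf_le ⟨0, Set.forall_mem_image.2 fun _ hK => hK.1 v⟩ (Set.mem_image_of_mem _ hH)

theorem exists_odometer_apply_eq_leastOdometer {Γ : Set V} {φ : V → ℤ}
    (hne : ∃ H, Odometer Γ φ H) (v : V) :
    ∃ K, Odometer Γ φ K ∧ K v = leastOdometer Γ φ v :=
  Int.csInf_mem (Set.Nonempty.image _ hne) ⟨0, Set.forall_mem_image.2 fun _ hK => hK.1 v⟩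

theorem isLeast_leastOdometer {Γ : Set V} {φ : V → ℤ} (hne : ∃ H, Odometer Γ φ H) :
    IsLeast {H | Odometer Γ φ H} (leastOdometer Γ φ) := by
  refine ⟨⟨fun v => ?_, fun v hv => ?_, fun v hv => ?_⟩, fun H hH => leastOdometer_le hH⟩ <;>
    obtain ⟨K, hK, hKv⟩ := exists_odometer_apply_eq_leastOdometer hne v
  · exact hKv ▸ hK.1 v
  · exact hKv ▸ hK.2.1 v hv
  · have lap_le : lap (leastOdometer Γ φ) v ≤ lap K v :=
      lap_le_lap hKv.le fun w _ => leastOdometer_le hK w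
    exact (add_le_add_right lap_le (φ v)).trans (hK.2.2 v hv)

/-- `u` counts the topplings at each site of some way of passing from `φ` to `ψ`. Since topplings
commute, only the net effect `ψ = φ + Δu` on `Γ` is recorded: neither the order nor the legality of
the topplings matters. -/
structure IsTopplingCount (Γ : Set V) (φ ψ u : V → ℤ) : Prop where
  nonneg : ∀ v, 0 ≤ u v
  eq_zero_of_notMem : ∀ v ∉ Γ, u v = 0
  eq_add_lap : ∀ v ∈ Γ, ψ v = φ v + lap u v

namespace IsTopplingCount

variable {Γ : Set V} {φ ψ u H : V → ℤ} {v : V}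

theorem zero (Γ : Set V) (φ : V → ℤ) : IsTopplingCount Γ φ φ 0 where
  nonneg _ := le_rfl
  eq_zero_of_notMem _ _ := rfl
  eq_add_lap v _ := by rw [lap_zero, add_zero]

theorem toppleAt (h : IsTopplingCount Γ φ ψ u) (hv : v ∈ Γ) :
    IsTopplingCount Γ φ (toppleAt Γ v ψ) (u + Pi.single v 1) where
  nonneg w :=
    have single_nonneg : (0 : V → ℤ) ≤ Pi.single v 1 := Pi.single_nonneg.2 zero_le_one
    add_nonneg (h.nonneg w) (single_nonneg w)
  eq_zero_of_notMem w hw := by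
    rw [Pi.add_apply, h.eq_zero_of_notMem w hw,
      Pi.single_eq_of_ne (ne_of_mem_of_not_mem hv hw).symm, add_zero]
  eq_add_lap w hw := by
    simp only [_root_.toppleAt, lap_add, lap_single_one, h.eq_add_lap w hw, hw, and_true]
    ring

theorem odometer (h : IsTopplingCount Γ φ ψ u) (hψ : StableState Γ ψ) : Odometer Γ φ u :=
  ⟨h.nonneg, h.eq_zero_of_notMem, fun v hv => h.eq_add_lap v hv ▸ hψ v hv⟩

theorem lt_odometer_of_unstable (h : IsTopplingCount Γ φ ψ u) (hH : Odometer Γ φ H) (huH : u ≤ H)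
    (hv : v ∈ Γ) (hψv : 4 ≤ ψ v) : u v < H v := by
  by_contra! hHu
  have lap_le : lap u v ≤ lap H v := lap_le_lap hHu fun w _ => huH w
  linarith [h.eq_add_lap v hv, hH.2.2 v hv]

theorem add_single_le_odometer (h : IsTopplingCount Γ φ ψ u) (hH : Odometer Γ φ H) (huH : u ≤ H)
    (hv : v ∈ Γ) (hψv : 4 ≤ ψ v) : u + Pi.single v 1 ≤ H := fun w => by
  rcases eq_or_ne w v with rfl | hwv
  · simpa only [Pi.add_apply, Pi.single_eq_same] using
      Int.add_one_le_of_lt (h.lt_odometer_of_unstable hH huH hv hψv)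
  · simpa only [Pi.add_apply, Pi.single_eq_of_ne hwv, add_zero] using huH w

end IsTopplingCount

theorem exists_isTopplingCount_mem_lowerBounds {Γ : Set V} {φ : V → ℤ} {ρ : ℕ → V → ℤ} {m : ℕ}
    (h_zero : ρ 0 = φ) (h_step : ∀ i < m, LegalStep Γ (ρ i) (ρ (i + 1))) :
    ∃ u, IsTopplingCount Γ φ (ρ m) u ∧ u ∈ lowerBounds {H | Odometer Γ φ H} := by
  induction m with
  | zero => exact ⟨0, h_zero ▸ .zero Γ (ρ 0), fun H hH => hH.1⟩
  | succ m ih =>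
    obtain ⟨u, hu, hu_le⟩ := ih fun i hi => h_step i (hi.trans m.lt_succ_self)
    obtain ⟨v, hv, h_unstable, h_topple⟩ := h_step m m.lt_succ_self
    exact ⟨u + Pi.single v 1, h_topple ▸ hu.toppleAt hv,
      fun H hH => hu.add_single_le_odometer hH (hu_le hH) hv h_unstable⟩

theorem Relaxes.exists_isLeast_odometer {Γ : Set V} {φ ψ : V → ℤ} (h : Relaxes Γ φ ψ) :
    ∃ u, IsLeast {H | Odometer Γ φ H} u ∧ ∀ v ∈ Γ, ψ v = φ v + lap u v := by
  obtain ⟨m, ρ, ⟨h_zero, h_step, h_stable⟩, rfl⟩ := h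
  obtain ⟨u, hu, hu_le⟩ := exists_isTopplingCount_mem_lowerBounds h_zero h_step
  exact ⟨u, ⟨hu.odometer h_stable, hu_le⟩, hu.eq_add_lap⟩

theorem statement1_general (Γ : Set V) (hΓ : (Prod.fst '' Γ).Finite) (φ : V → ℤ)
    (hφ : BddAbove (φ '' Γ)) :
    (∃ H : V → ℤ, Odometer Γ φ H) ∧
    ∃ F : V → ℤ, Odometer Γ φ F ∧ (∀ H : V → ℤ, Odometer Γ φ H → ∀ v, F v ≤ H v) ∧
      ∀ ψ : V → ℤ, Relaxes Γ φ ψ → ∀ v ∈ Γ, ψ v = φ v + lap F v := by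
  have hne : ∃ H, Odometer Γ φ H := exists_odometer hΓ hφ
  have hF := isLeast_leastOdometer hne
  refine ⟨hne, leastOdometer Γ φ, hF.1, fun H hH => hF.2 hH, fun ψ hψ => ?_⟩
  obtain ⟨u, hu, hψu⟩ := hψ.exists_isLeast_odometer
  exact hu.unique hF ▸ hψu

/-- least action principle. For a state `φ` on a finite `Γ ⊆ ℤ²`,
the class `𝓗` of nonnegative functions vanishing outside `Γ` with `φ + ΔH ≤ 3` on `Γ`
is nonempty, its pointwise minimum `F` again belongs to `𝓗`, and the result of the
relaxation of `φ` equals `φ + ΔF` on `Γ`. -/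
theorem statement1 (Γ : Set V) (hΓ : Γ.Finite) (φ : V → ℤ) (hφ : IsState Γ φ) :
    (∃ H : V → ℤ, Odometer Γ φ H) ∧
    ∃ F : V → ℤ, Odometer Γ φ F ∧ (∀ H : V → ℤ, Odometer Γ φ H → ∀ v, F v ≤ H v) ∧
      ∀ ψ : V → ℤ, Relaxes Γ φ ψ → ∀ v ∈ Γ, ψ v = φ v + lap F v :=
  statement1_general Γ (hΓ.image Prod.fst) φ (hΓ.image φ).bddAbove
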